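/- Let k ≥ 4 and let (λ₁, ..., λ_{k−3}) be real numbers with 0 < λ₁ < λ₂ < ⋯ < λ_{k−3} < 1. Then the k-tuple (z₁, ..., z_k) := (−i, 1, −1, 𝒞(λ₁), ..., 𝒞(λ_{k−3})) is a cyclically oriented tuple of points of the unit circle S¹, and its cross ratio coordinates recover the λ_j, that is, [z₂:z₃:z₁:z_{j+3}] = λ_j for j = 1, ..., k−3. -/

import Mathlib

open Complex

/-- The cross ratio `[z₁:z₂:z₃:z₄] = (z₁-z₃)(z₂-z₄)/((z₂-z₃)(z₁-z₄))`. -/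
noncomputable def crossRatio (z₁ z₂ z₃ z₄ : ℂ) : ℂ :=
  ((z₁ - z₃) * (z₂ - z₄)) / ((z₂ - z₃) * (z₁ - z₄))

/-- A tuple `(z₁, …, z_k)` of points of `S¹` is *cyclically oriented* if it can be written as
`z_j = e^{iθ_j}` with `θ₁ < θ₂ < ⋯ < θ_k < θ₁ + 2π`. -/
def CyclicallyOriented {k : ℕ} (z : Fin k → ℂ) : Prop :=
  ∃ θ : Fin k → ℝ, StrictMono θ ∧ (∀ i j : Fin k, θ j < θ i + 2 * Real.pi) ∧
    ∀ j, z j = Complex.exp (θ j * Complex.I)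

/-- The Cayley transform `𝒞(z) = (z-i)/(z+i)`. -/
noncomputable def cayley (z : ℂ) : ℂ := (z - Complex.I) / (z + Complex.I)

/-- The tuple `(-i, 1, -1, 𝒞(λ₁), …, 𝒞(λ_{k-3}))` (0-indexed). -/
noncomputable def stdTuple (k : ℕ) (lam : Fin (k - 3) → ℝ) : Fin k → ℂ := fun j =>
  if h0 : (j : ℕ) = 0 then -Complex.I
  else if h1 : (j : ℕ) = 1 then 1
  else if h2 : (j : ℕ) = 2 then -1
  else cayley ((lam ⟨(j : ℕ) - 3, by have := j.isLt; omega⟩ : ℝ) : ℂ)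

/-!
The Cayley transform sends `∞, 0, 1` to `1, -1, -i`, so the coordinate `[1 : -1 : -i : 𝒞(z)]` is
`[∞ : 0 : 1 : z] = z`. On the real line `𝒞(x) = exp (i (π + 2 arctan x))`, hence the points of the
standard tuple have the increasing arguments `-π/2, 0, π, π + 2 arctan λ₁, …`, the last of which is
below `π + 2 arctan 1 = -π/2 + 2π`.
-/

lemma ofReal_ne_I (x : ℝ) : (x : ℂ) ≠ I := fun h => by
  simpa using congrArg Complex.im h

lemma ofReal_ne_neg_I (x : ℝ) : (x : ℂ) ≠ -I := fun h => by
  simpa using congrArg Complex.im h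

lemma cayley_eq_exp_arctan {z : ℂ} (hz : z ≠ I) (hz' : z ≠ -I) :
    cayley z = exp ((Real.pi + 2 * arctan z) * I) := by
  have num_ne : 1 + z * I ≠ 0 := fun h => hz (by linear_combination -I * h + z * I_sq)
  have den_ne : 1 - z * I ≠ 0 := fun h => hz' (by linear_combination I * h + z * I_sq)
  have add_I_ne : z + I ≠ 0 := fun h => hz' (eq_neg_of_add_eq_zero_left h)
  have exp_two_arctan : exp (2 * arctan z * I) = (1 + z * I) / (1 - z * I) := by
    have two_arctan_mul_I : 2 * arctan z * I = log ((1 + z * I) / (1 - z * I)) := by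
      rw [arctan]
      linear_combination -log ((1 + z * I) / (1 - z * I)) * I_sq
    rw [two_arctan_mul_I, exp_log (div_ne_zero num_ne den_ne)]
  rw [add_mul, exp_add, exp_pi_mul_I, exp_two_arctan, cayley, neg_one_mul, ← neg_div,
    div_eq_div_iff add_I_ne den_ne]
  linear_combination 2 * z * I_sq

lemma crossRatio_one_neg_one_neg_I_cayley {z : ℂ} (hz : z ≠ -I) :
    crossRatio 1 (-1) (-I) (cayley z) = z := by
  have add_I_ne : z + I ≠ 0 := fun h => hz (eq_neg_of_add_eq_zero_left h)
  have one_sub_cayley : 1 - cayley z = 2 * I / (z + I) := by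
    rw [cayley]; field_simp; ring
  have neg_one_sub_cayley : -1 - cayley z = -(2 * z) / (z + I) := by
    rw [cayley]; field_simp; ring
  have neg_one_sub_neg_I_ne : (-1 : ℂ) - -I ≠ 0 := fun h => by
    simpa using congrArg Complex.re h
  have den_ne : (-1 - -I) * (2 * I / (z + I)) ≠ 0 :=
    mul_ne_zero neg_one_sub_neg_I_ne (div_ne_zero (mul_ne_zero two_ne_zero I_ne_zero) add_I_ne)
  rw [crossRatio, one_sub_cayley, neg_one_sub_cayley, div_eq_iff den_ne]
  field_simp
  linear_combination -z * I_sq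

lemma cyclicallyOriented_exp_of_strictMono {k : ℕ} {θ : Fin (k + 1) → ℝ} (hθ : StrictMono θ)
    (hlast : θ (Fin.last k) < θ 0 + 2 * Real.pi) :
    CyclicallyOriented fun j => exp (θ j * I) := by
  refine ⟨θ, hθ, fun i j => ?_, fun _ => rfl⟩
  calc θ j ≤ θ (Fin.last k) := hθ.monotone (Fin.le_last j)
    _ < θ 0 + 2 * Real.pi := hlast
    _ ≤ θ i + 2 * Real.pi := by gcongr; exact hθ.monotone (Fin.zero_le i)

lemma CyclicallyOriented.norm_eq_one {k : ℕ} {z : Fin k → ℂ} (hz : CyclicallyOriented z)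
    (j : Fin k) : ‖z j‖ = 1 := by
  obtain ⟨θ, -, -, hexp⟩ := hz
  rw [hexp, norm_exp_ofReal_mul_I]

/-- Arguments `-π/2, 0, π, π + 2 arctan λ₁, …, π + 2 arctan λₙ` of the points of the standard tuple,
on the branch `[-π/2, 3π/2)` when all `λⱼ` lie in `[0, 1)`. -/
noncomputable def stdAngle {n : ℕ} (lam : Fin n → ℝ) : Fin (n + 3) → ℝ :=
  Matrix.vecCons (-(Real.pi / 2)) <| Matrix.vecCons 0 <| Matrix.vecCons Real.pi fun j =>
    Real.pi + 2 * Real.arctan (lam j)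

lemma stdTuple_eq_exp_stdAngle {n : ℕ} (lam : Fin n → ℝ) :
    stdTuple (n + 3) lam = fun j => exp (stdAngle lam j * I) := by
  funext j
  refine Fin.cases ?_ (Fin.cases ?_ (Fin.cases ?_ fun i => ?_)) j
  · simp [stdTuple, stdAngle, exp_neg, exp_pi_div_two_mul_I]
  · simp [stdTuple, stdAngle]
  · exact exp_pi_mul_I.symm
  · simp [stdTuple, stdAngle, cayley_eq_exp_arctan (ofReal_ne_I (lam i)) (ofReal_ne_neg_I (lam i))]

section

variable {n : ℕ} {lam : Fin (n + 1) → ℝ}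

lemma strictMono_stdAngle (hpos : 0 < lam 0) (hmono : StrictMono lam) :
    StrictMono (stdAngle lam) := by
  have angle_mono : StrictMono fun j => Real.pi + 2 * Real.arctan (lam j) :=
    ((Real.arctan_strictMono.comp hmono).const_mul two_pos).const_add Real.pi
  have pi_lt : Real.pi < Real.pi + 2 * Real.arctan (lam 0) := by
    linarith [Real.arctan_pos.2 hpos]
  exact strictMono_vecCons.2 ⟨by simp [Real.pi_pos], strictMono_vecCons.2 ⟨Real.pi_pos,
    strictMono_vecCons.2 ⟨pi_lt, angle_mono⟩⟩⟩

lemma stdAngle_last_lt (hlast : lam (Fin.last n) < 1) :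
    stdAngle lam (Fin.last (n + 3)) < stdAngle lam 0 + 2 * Real.pi := by
  have arctan_lt : Real.arctan (lam (Fin.last n)) < Real.pi / 4 :=
    Real.arctan_one ▸ Real.arctan_strictMono hlast
  calc stdAngle lam (Fin.last (n + 3)) = Real.pi + 2 * Real.arctan (lam (Fin.last n)) := rfl
    _ < -(Real.pi / 2) + 2 * Real.pi := by linarith
    _ = stdAngle lam 0 + 2 * Real.pi := rfl

lemma cyclicallyOriented_stdTuple (hpos : 0 < lam 0) (hmono : StrictMono lam)
    (hlast : lam (Fin.last n) < 1) : CyclicallyOriented (stdTuple (n + 4) lam) := by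
  rw [stdTuple_eq_exp_stdAngle]
  exact cyclicallyOriented_exp_of_strictMono (strictMono_stdAngle hpos hmono)
    (stdAngle_last_lt hlast)

end

/-- **Lemma (realization of cross ratio coordinates).** For `0 < λ₁ < ⋯ < λ_{k-3} < 1`, the
tuple `(-i, 1, -1, 𝒞(λ₁), …, 𝒞(λ_{k-3}))` is a cyclically oriented tuple of points of the unit
circle and its cross ratio coordinates are exactly the `λ_j`. -/
theorem stdTuple_cyclicallyOriented_and_coords (k : ℕ) (hk : 4 ≤ k)
    (lam : Fin (k - 3) → ℝ) (h0 : ∀ j, 0 < lam j) (hmono : StrictMono lam)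
    (h1 : ∀ j, lam j < 1) :
    (∀ j, ‖stdTuple k lam j‖ = 1) ∧
    CyclicallyOriented (stdTuple k lam) ∧
    ∀ j : Fin (k - 3),
      crossRatio (stdTuple k lam ⟨1, by omega⟩) (stdTuple k lam ⟨2, by omega⟩)
          (stdTuple k lam ⟨0, by omega⟩)
          (stdTuple k lam ⟨(j : ℕ) + 3, by have := j.isLt; omega⟩) = (lam j : ℂ) := by
  obtain ⟨n, rfl⟩ : ∃ n, k = n + 4 := ⟨k - 4, by omega⟩
  have oriented : CyclicallyOriented (stdTuple (n + 4) lam) :=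
    cyclicallyOriented_stdTuple (h0 _) hmono (h1 _)
  refine ⟨oriented.norm_eq_one, oriented, fun j => ?_⟩
  simpa [stdTuple] using crossRatio_one_neg_one_neg_I_cayley (ofReal_ne_neg_I (lam j))
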